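/- Let (X_{n,θ})_{n∈ℕ, θ∈Θ}, (Y_{n,θ})_{n∈ℕ, θ∈Θ} and (X_θ)_{θ∈Θ} be random variables on (Ω, F), with the X-families taking values in a separable Banach space B. Assume (X_{n,θ}) converges uniformly in distribution over Θ to (X_θ) and (Y_{n,θ}) converges uniformly in probability over Θ to 0. Then: (i) if (Y_{n,θ}) is B-valued, (X_{n,θ} + Y_{n,θ}) converges uniformly in distribution over Θ to (X_θ); (ii) if (Y_{n,θ}) is real-valued and (X_θ)_{θ∈Θ} is uniformly tight, then (Y_{n,θ} · X_{n,θ}) converges uniformly in probability over Θ to 0. -/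

import Mathlib

open MeasureTheory ProbabilityTheory Filter
open scoped ENNReal NNReal RealInnerProductSpace

noncomputable section

/-- Bounded-Lipschitz distance between the laws of `U` and `V` under `μ`, i.e. the supremum of
`|E f(U) - E f(V)|` over functions `f` with values in `[-1, 1]` that are `1`-Lipschitz. -/
def dBL {Ω B : Type*} [MeasurableSpace Ω] [PseudoMetricSpace B]
    (μ : Measure Ω) (U V : Ω → B) : ℝ :=
  ⨆ f : {g : B → ℝ // LipschitzWith 1 g ∧ ∀ x, |g x| ≤ 1},
    |(∫ ω, f.1 (U ω) ∂μ) - ∫ ω, f.1 (V ω) ∂μ|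

/-- `(X_{n,θ})` converges uniformly in distribution over `Θ` to `(Xlim_θ)`. -/
def TendstoUnifInDist {Ω Θ B : Type*} [MeasurableSpace Ω] [PseudoMetricSpace B]
    (P : Θ → Measure Ω) (X : ℕ → Θ → Ω → B) (Xlim : Θ → Ω → B) : Prop :=
  Filter.Tendsto (fun n => ⨆ θ, dBL (P θ) (X n θ) (Xlim θ)) Filter.atTop (nhds 0)

/-- `(X_{n,θ})` converges uniformly in probability over `Θ` to `(Xlim_θ)`. -/
def TendstoUnifInProb {Ω Θ B : Type*} [MeasurableSpace Ω] [NormedAddCommGroup B]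
    (P : Θ → Measure Ω) (X : ℕ → Θ → Ω → B) (Xlim : Θ → Ω → B) : Prop :=
  ∀ ε : ℝ, 0 < ε →
    Filter.Tendsto (fun n => ⨆ θ, P θ {ω | ε ≤ ‖X n θ ω - Xlim θ ω‖}) Filter.atTop (nhds 0)

/-- The family `(X_θ)` is uniformly tight over `Θ`. -/
def UniformlyTight {Ω Θ B : Type*} [MeasurableSpace Ω] [TopologicalSpace B]
    (P : Θ → Measure Ω) (X : Θ → Ω → B) : Prop :=
  ∀ ε : ℝ, 0 < ε → ∃ K : Set B, IsCompact K ∧ (⨆ θ, P θ {ω | X θ ω ∉ K}) < ENNReal.ofReal ε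

/-!
Part (i): the bounded-Lipschitz distance satisfies the triangle inequality, and
`dBL μ U V ≤ δ + 2 μ {δ ≤ dist U V}`, so a perturbation that is uniformly small in probability is
uniformly small in `dBL`.

Part (ii): testing `dBL` against a scaled thickened indicator of the complement of a ball carries
boundedness in probability over from the limits `Xlim θ` to the `X n θ`, at the price of enlarging
the radius by `1`. What is left is the usual rule `o_P(1) · O_P(1) = o_P(1)`, uniformly in `θ`.
-/

theorem tendsto_iSup_nhds_zero_iff {ι Θ : Type*} {l : Filter ι} {a : ι → Θ → ℝ}
    (a_nonneg : ∀ i θ, 0 ≤ a i θ) (a_bdd : ∀ i, BddAbove (Set.range (a i))) :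
    Tendsto (fun i => ⨆ θ, a i θ) l (nhds 0) ↔ ∀ δ : ℝ, 0 < δ → ∀ᶠ i in l, ∀ θ, a i θ ≤ δ := by
  have iSup_nonneg (i : ι) : 0 ≤ ⨆ θ, a i θ := Real.iSup_nonneg (a_nonneg i)
  simp only [Metric.tendsto_nhds, Real.dist_0_eq_abs, abs_of_nonneg (iSup_nonneg _)]
  constructor
  · intro h δ hδ
    filter_upwards [h δ hδ] with i hi θ
    exact (le_ciSup (a_bdd i) θ).trans hi.le
  · intro h δ hδ
    filter_upwards [h (δ / 2) (half_pos hδ)] with i hi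
    exact (Real.iSup_le hi (half_pos hδ).le).trans_lt (half_lt_self hδ)

theorem integral_le_add_mul_measureReal {Ω : Type*} [MeasurableSpace Ω] {μ : Measure Ω}
    [IsFiniteMeasure μ] {g : Ω → ℝ} {A : Set Ω} {c C : ℝ} (hg : Integrable g μ) (hC : 0 ≤ C)
    (g_le : ∀ ω, g ω ≤ c + C) (g_le_off : ∀ ω, ω ∉ A → g ω ≤ c) :
    ∫ ω, g ω ∂μ ≤ c * μ.real Set.univ + C * μ.real A := by
  set A' := toMeasurable μ A
  have hA' : MeasurableSet A' := measurableSet_toMeasurable μ A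
  have hind : Integrable (A'.indicator fun _ => C) μ := (integrable_const C).indicator hA'
  have g_le_indicator (ω : Ω) : g ω ≤ c + A'.indicator (fun _ => C) ω := by
    by_cases hω : ω ∈ A
    · rw [Set.indicator_of_mem (subset_toMeasurable μ A hω)]
      exact g_le ω
    · exact (g_le_off ω hω).trans (le_add_of_nonneg_right (Set.indicator_nonneg (fun _ _ => hC) ω))
  calc ∫ ω, g ω ∂μ
      ≤ ∫ ω, (c + A'.indicator (fun _ => C) ω) ∂μ :=
        integral_mono hg ((integrable_const c).add hind) g_le_indicator
    _ = c * μ.real Set.univ + C * μ.real A' := by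
        rw [integral_add (integrable_const c) hind, integral_indicator_const C hA', integral_const,
          smul_eq_mul, smul_eq_mul, mul_comm c, mul_comm C]
    _ = c * μ.real Set.univ + C * μ.real A := by
        rw [measureReal_def μ A', measure_toMeasurable, ← measureReal_def]

theorem abs_integral_sub_integral_le {Ω : Type*} [MeasurableSpace Ω] {μ : Measure Ω}
    [IsFiniteMeasure μ] {u v : Ω → ℝ} {C : ℝ} (hu : ∀ ω, |u ω| ≤ C) (hv : ∀ ω, |v ω| ≤ C) :
    |(∫ ω, u ω ∂μ) - ∫ ω, v ω ∂μ| ≤ 2 * (C * μ.real Set.univ) := by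
  have abs_integral_le {w : Ω → ℝ} (hw : ∀ ω, |w ω| ≤ C) : |∫ ω, w ω ∂μ| ≤ C * μ.real Set.univ :=
    (Real.norm_eq_abs _).symm.trans_le (norm_integral_le_of_norm_le_const (.of_forall hw))
  linarith [abs_sub (∫ ω, u ω ∂μ) (∫ ω, v ω ∂μ), abs_integral_le hu, abs_integral_le hv]

section BoundedLipschitzDistance

variable {Ω B : Type*} [MeasurableSpace Ω] [PseudoMetricSpace B] {μ : Measure Ω} {U V : Ω → B}

theorem integrable_comp_of_lipschitzWith_of_abs_le [MeasurableSpace B] [OpensMeasurableSpace B]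
    [IsFiniteMeasure μ] {f : B → ℝ} {K : ℝ≥0} {C : ℝ} (hU : AEMeasurable U μ)
    (hf : LipschitzWith K f) (hf_le : ∀ x, |f x| ≤ C) : Integrable (fun ω => f (U ω)) μ :=
  .of_bound (hf.continuous.measurable.comp_aemeasurable hU).aestronglyMeasurable C
    (.of_forall fun ω => hf_le (U ω))

theorem dBL_nonneg : 0 ≤ dBL μ U V :=
  Real.iSup_nonneg fun _ => abs_nonneg _

theorem dBL_le_of_forall {c : ℝ} (hc : 0 ≤ c)
    (h : ∀ f : B → ℝ, LipschitzWith 1 f → (∀ x, |f x| ≤ 1) →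
      |(∫ ω, f (U ω) ∂μ) - ∫ ω, f (V ω) ∂μ| ≤ c) : dBL μ U V ≤ c :=
  Real.iSup_le (fun f => h f.1 f.2.1 f.2.2) hc

theorem dBL_le_two [IsProbabilityMeasure μ] : dBL μ U V ≤ 2 :=
  dBL_le_of_forall zero_le_two fun _ _ hf_le => by
    simpa using abs_integral_sub_integral_le (μ := μ) (fun ω => hf_le (U ω)) fun ω => hf_le (V ω)

theorem abs_integral_sub_integral_le_dBL [IsFiniteMeasure μ] {f : B → ℝ} (hf : LipschitzWith 1 f)
    (hf_le : ∀ x, |f x| ≤ 1) : |(∫ ω, f (U ω) ∂μ) - ∫ ω, f (V ω) ∂μ| ≤ dBL μ U V :=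
  le_ciSup (f := fun g : {g : B → ℝ // LipschitzWith 1 g ∧ ∀ x, |g x| ≤ 1} =>
      |(∫ ω, g.1 (U ω) ∂μ) - ∫ ω, g.1 (V ω) ∂μ|)
    ⟨_, Set.forall_mem_range.2 fun g =>
      abs_integral_sub_integral_le (fun ω => g.2.2 (U ω)) fun ω => g.2.2 (V ω)⟩ ⟨f, hf, hf_le⟩

theorem dBL_triangle [IsFiniteMeasure μ] (U V W : Ω → B) :
    dBL μ U W ≤ dBL μ U V + dBL μ V W :=
  dBL_le_of_forall (add_nonneg dBL_nonneg dBL_nonneg) fun _ hf hf_le =>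
    (abs_sub_le _ _ _).trans <| add_le_add (abs_integral_sub_integral_le_dBL hf hf_le)
      (abs_integral_sub_integral_le_dBL hf hf_le)

theorem lipschitzWith_one_mul_thickenedIndicator {δ : ℝ} (hδ : 0 < δ) (E : Set B) :
    LipschitzWith 1 fun x => δ * (thickenedIndicator hδ E x : ℝ) := by
  refine LipschitzWith.of_dist_le_mul fun x y => ?_
  have h := (lipschitzWith_thickenedIndicator hδ E).dist_le_mul x y
  rw [NNReal.coe_inv, Real.coe_toNNReal δ hδ.le, inv_mul_eq_div, le_div_iff₀' hδ,
    NNReal.dist_eq] at h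
  rwa [Real.dist_eq, ← mul_sub, abs_mul, abs_of_pos hδ, NNReal.coe_one, one_mul]

variable [MeasurableSpace B] [OpensMeasurableSpace B] [IsFiniteMeasure μ]

theorem dBL_le_add_two_mul_measureReal {δ : ℝ} (hδ : 0 ≤ δ) (hU : AEMeasurable U μ)
    (hV : AEMeasurable V μ) :
    dBL μ U V ≤ δ * μ.real Set.univ + 2 * μ.real {ω | δ ≤ dist (U ω) (V ω)} := by
  refine dBL_le_of_forall (by positivity) fun f hf hf_le => ?_
  have hfU := integrable_comp_of_lipschitzWith_of_abs_le hU hf hf_le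
  have hfV := integrable_comp_of_lipschitzWith_of_abs_le hV hf hf_le
  rw [← integral_sub hfU hfV]
  refine abs_integral_le_integral_abs.trans
    (integral_le_add_mul_measureReal (hfU.sub hfV).abs zero_le_two (fun ω => ?_) fun ω hω => ?_)
  · linarith [abs_sub (f (U ω)) (f (V ω)), hf_le (U ω), hf_le (V ω)]
  · have hdist : dist (U ω) (V ω) < δ := not_le.1 hω
    calc |f (U ω) - f (V ω)| ≤ dist (U ω) (V ω) := by
          simpa [Real.dist_eq] using hf.dist_le_mul (U ω) (V ω)
      _ ≤ δ := hdist.le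

theorem mul_measureReal_mem_le_dBL_add {δ : ℝ} (hδ : 0 < δ) (hδ_le : δ ≤ 1)
    (hU : AEMeasurable U μ) (hV : AEMeasurable V μ) (E : Set B) :
    δ * μ.real {ω | U ω ∈ E} ≤ dBL μ U V + δ * μ.real {ω | V ω ∈ Metric.thickening δ E} := by
  set f : B → ℝ := fun x => δ * thickenedIndicator hδ E x
  have hf : LipschitzWith 1 f := lipschitzWith_one_mul_thickenedIndicator hδ E
  have f_nonneg (x : B) : 0 ≤ f x := by positivity
  have f_le (x : B) : f x ≤ δ :=
    mul_le_of_le_one_right hδ.le (NNReal.coe_le_one.2 (thickenedIndicator_le_one hδ E x))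
  have abs_f_le (x : B) : |f x| ≤ 1 := by
    rw [abs_of_nonneg (f_nonneg x)]; exact (f_le x).trans hδ_le
  have hfU := integrable_comp_of_lipschitzWith_of_abs_le hU hf abs_f_le
  have hfV := integrable_comp_of_lipschitzWith_of_abs_le hV hf abs_f_le
  have subset_superlevel : {ω | U ω ∈ E} ⊆ {ω | δ ≤ f (U ω)} := fun ω hω => by
    simp only [f, Set.mem_ofPred_eq, thickenedIndicator_one hδ E hω, NNReal.coe_one, mul_one,
      le_refl]
  calc δ * μ.real {ω | U ω ∈ E}
      ≤ δ * μ.real {ω | δ ≤ f (U ω)} := by gcongr; exact measure_ne_top _ _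
    _ ≤ ∫ ω, f (U ω) ∂μ :=
        mul_meas_ge_le_integral_of_nonneg (.of_forall fun ω => f_nonneg (U ω)) hfU δ
    _ ≤ dBL μ U V + ∫ ω, f (V ω) ∂μ := by
        linarith [le_abs_self ((∫ ω, f (U ω) ∂μ) - ∫ ω, f (V ω) ∂μ),
          abs_integral_sub_integral_le_dBL (μ := μ) (U := U) (V := V) hf abs_f_le]
    _ ≤ dBL μ U V + (0 * μ.real Set.univ + δ * μ.real {ω | V ω ∈ Metric.thickening δ E}) := by
        gcongr
        refine integral_le_add_mul_measureReal hfV hδ.le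
          (fun ω => (f_le (V ω)).trans (zero_add δ).ge) fun ω hω => ?_
        simp only [f, thickenedIndicator_zero hδ E hω, NNReal.coe_zero, mul_zero, le_refl]
    _ = dBL μ U V + δ * μ.real {ω | V ω ∈ Metric.thickening δ E} := by
        rw [zero_mul, zero_add]

end BoundedLipschitzDistance

section NormTails

variable {Ω B : Type*} [MeasurableSpace Ω] [SeminormedAddCommGroup B] {μ : Measure Ω}
  [IsFiniteMeasure μ]

theorem thickening_norm_ge_subset (R δ : ℝ) :
    Metric.thickening δ {x : B | R + δ ≤ ‖x‖} ⊆ {x | R ≤ ‖x‖} := by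
  intro x hx
  obtain ⟨z, hz, hxz⟩ := Metric.mem_thickening_iff.1 hx
  have hz : R + δ ≤ ‖z‖ := hz
  rw [dist_comm, dist_eq_norm] at hxz
  change R ≤ ‖x‖
  linarith [norm_sub_norm_le z x]

theorem measureReal_norm_ge_add_one_le [MeasurableSpace B] [OpensMeasurableSpace B]
    {U V : Ω → B} (hU : AEMeasurable U μ) (hV : AEMeasurable V μ) (R : ℝ) :
    μ.real {ω | R + 1 ≤ ‖U ω‖} ≤ dBL μ U V + μ.real {ω | R ≤ ‖V ω‖} := by
  have h := mul_measureReal_mem_le_dBL_add one_pos le_rfl hU hV {x | R + 1 ≤ ‖x‖}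
  simp only [one_mul] at h
  have hsubset : {ω | V ω ∈ Metric.thickening 1 {x | R + 1 ≤ ‖x‖}} ⊆ {ω | R ≤ ‖V ω‖} :=
    fun _ hω => thickening_norm_ge_subset R 1 hω
  exact h.trans (add_le_add le_rfl (measureReal_mono hsubset))

theorem measureReal_norm_smul_ge_le {𝕜 : Type*} [SeminormedRing 𝕜] [Module 𝕜 B]
    [IsBoundedSMul 𝕜 B] (U : Ω → B) (S : Ω → 𝕜) (ε : ℝ) {R : ℝ} (hR : 0 < R) :
    μ.real {ω | ε ≤ ‖S ω • U ω‖} ≤ μ.real {ω | ε / R ≤ ‖S ω‖} + μ.real {ω | R ≤ ‖U ω‖} := by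
  have hsubset : {ω | ε ≤ ‖S ω • U ω‖} ⊆ {ω | ε / R ≤ ‖S ω‖} ∪ {ω | R ≤ ‖U ω‖} := by
    intro ω hω
    by_contra hcon
    obtain ⟨hS, hU⟩ : ‖S ω‖ < ε / R ∧ ‖U ω‖ < R := by
      simpa only [Set.mem_union, Set.mem_ofPred_eq, not_or, not_le] using hcon
    have hlt : ‖S ω • U ω‖ < ε :=
      calc ‖S ω • U ω‖ ≤ ‖S ω‖ * ‖U ω‖ := norm_smul_le _ _
        _ < ε / R * R := mul_lt_mul'' hS hU (norm_nonneg _) (norm_nonneg _)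
        _ = ε := div_mul_cancel₀ ε hR.ne'
    exact hlt.not_ge hω
  exact (measureReal_mono hsubset).trans (measureReal_union_le _ _)

end NormTails

/-- The family `(X_{n,θ})` is eventually bounded in probability, uniformly over `Θ`: the uniform
`O_P(1)` condition. A family indexed by `Θ` alone is treated as constant in `n`. -/
def UnifBoundedInProb {Ω Θ B : Type*} [MeasurableSpace Ω] [Norm B]
    (P : Θ → Measure Ω) (X : ℕ → Θ → Ω → B) : Prop :=
  ∀ δ : ℝ, 0 < δ → ∃ R : ℝ, 0 < R ∧ ∀ᶠ n in atTop, ∀ θ, (P θ).real {ω | R ≤ ‖X n θ ω‖} ≤ δ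

section UniformModes

variable {Ω Θ B : Type*} [MeasurableSpace Ω] {P : Θ → Measure Ω}

theorem tendstoUnifInDist_iff [PseudoMetricSpace B] [∀ θ, IsProbabilityMeasure (P θ)]
    {X : ℕ → Θ → Ω → B} {Xlim : Θ → Ω → B} :
    TendstoUnifInDist P X Xlim ↔
      ∀ δ : ℝ, 0 < δ → ∀ᶠ n in atTop, ∀ θ, dBL (P θ) (X n θ) (Xlim θ) ≤ δ :=
  tendsto_iSup_nhds_zero_iff (fun _ _ => dBL_nonneg) fun _ =>
    ⟨2, Set.forall_mem_range.2 fun _ => dBL_le_two⟩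

variable [NormedAddCommGroup B] {X : ℕ → Θ → Ω → B} {Xlim : Θ → Ω → B}

theorem tendstoUnifInProb_iff [∀ θ, IsFiniteMeasure (P θ)] :
    TendstoUnifInProb P X Xlim ↔ ∀ ε : ℝ, 0 < ε → ∀ δ : ℝ, 0 < δ →
      ∀ᶠ n in atTop, ∀ θ, (P θ).real {ω | ε ≤ ‖X n θ ω - Xlim θ ω‖} ≤ δ := by
  refine forall₂_congr fun ε _ => ?_
  simp only [ENNReal.tendsto_nhds_zero, iSup_le_iff]
  constructor
  · intro h δ hδ
    filter_upwards [h (ENNReal.ofReal δ) (ENNReal.ofReal_pos.2 hδ)] with n hn θ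
    exact ENNReal.toReal_le_of_le_ofReal hδ.le (hn θ)
  · intro h δ hδ
    obtain rfl | hδ_top := eq_or_ne δ ⊤
    · exact .of_forall fun _ _ => le_top
    filter_upwards [h δ.toReal (ENNReal.toReal_pos hδ.ne' hδ_top)] with n hn θ
    exact (ENNReal.toReal_le_toReal (measure_ne_top _ _) hδ_top).1 (hn θ)

theorem UniformlyTight.unifBoundedInProb (h : UniformlyTight P Xlim) :
    UnifBoundedInProb P fun _ => Xlim := by
  intro δ hδ
  obtain ⟨K, hK, hPK⟩ := h δ hδ
  obtain ⟨R, hR, hKR⟩ := hK.isBounded.exists_pos_norm_le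
  refine ⟨R + 1, by positivity, .of_forall fun _ θ => ENNReal.toReal_le_of_le_ofReal hδ.le ?_⟩
  have hsubset : {ω | R + 1 ≤ ‖Xlim θ ω‖} ⊆ {ω | Xlim θ ω ∉ K} := fun ω hω hmem =>
    ((hKR _ hmem).trans_lt (lt_add_one R)).not_ge hω
  calc P θ {ω | R + 1 ≤ ‖Xlim θ ω‖} ≤ P θ {ω | Xlim θ ω ∉ K} := measure_mono hsubset
    _ ≤ ⨆ θ, P θ {ω | Xlim θ ω ∉ K} := le_iSup (fun θ => P θ {ω | Xlim θ ω ∉ K}) θ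
    _ ≤ ENNReal.ofReal δ := hPK.le

theorem TendstoUnifInDist.unifBoundedInProb [MeasurableSpace B] [OpensMeasurableSpace B]
    [∀ θ, IsProbabilityMeasure (P θ)] (hconv : TendstoUnifInDist P X Xlim)
    (hX : ∀ n θ, AEMeasurable (X n θ) (P θ)) (hXlim : ∀ θ, AEMeasurable (Xlim θ) (P θ))
    (hbdd : UnifBoundedInProb P fun _ => Xlim) : UnifBoundedInProb P X := by
  intro δ hδ
  obtain ⟨R, hR, hXlim_tail⟩ := hbdd (δ / 2) (half_pos hδ)
  refine ⟨R + 1, by positivity, ?_⟩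
  filter_upwards [hXlim_tail, tendstoUnifInDist_iff.1 hconv (δ / 2) (half_pos hδ)]
    with n htail hdist θ
  linarith [measureReal_norm_ge_add_one_le (hX n θ) (hXlim θ) R, htail θ, hdist θ]

theorem TendstoUnifInDist.add_tendstoUnifInProb_zero [MeasurableSpace B] [OpensMeasurableSpace B]
    [∀ θ, IsProbabilityMeasure (P θ)] {Y : ℕ → Θ → Ω → B} (hconv : TendstoUnifInDist P X Xlim)
    (hX : ∀ n θ, AEMeasurable (X n θ) (P θ))
    (hXY : ∀ n θ, AEMeasurable (fun ω => X n θ ω + Y n θ ω) (P θ))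
    (hY : TendstoUnifInProb P Y fun _ _ => 0) :
    TendstoUnifInDist P (fun n θ ω => X n θ ω + Y n θ ω) Xlim := by
  refine tendstoUnifInDist_iff.2 fun δ hδ => ?_
  have hδ4 : 0 < δ / 4 := by positivity
  filter_upwards [tendstoUnifInDist_iff.1 hconv (δ / 4) hδ4,
    tendstoUnifInProb_iff.1 hY (δ / 4) hδ4 (δ / 4) hδ4] with n hdist hprob θ
  have hpert := dBL_le_add_two_mul_measureReal hδ4.le (hXY n θ) (hX n θ)
  simp only [dist_eq_norm, add_sub_cancel_left, probReal_univ, mul_one] at hpert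
  have hprob := hprob θ
  simp only [sub_zero] at hprob
  linarith [dBL_triangle (μ := P θ) (fun ω => X n θ ω + Y n θ ω) (X n θ) (Xlim θ), hdist θ]

theorem TendstoUnifInProb.smul_unifBoundedInProb {𝕜 : Type*} [NormedRing 𝕜] [Module 𝕜 B]
    [IsBoundedSMul 𝕜 B] [∀ θ, IsFiniteMeasure (P θ)] {Y : ℕ → Θ → Ω → 𝕜}
    (hY : TendstoUnifInProb P Y fun _ _ => 0) (hX : UnifBoundedInProb P X) :
    TendstoUnifInProb P (fun n θ ω => Y n θ ω • X n θ ω) fun _ _ => 0 := by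
  rw [tendstoUnifInProb_iff] at hY ⊢
  simp only [sub_zero] at hY ⊢
  intro ε hε δ hδ
  obtain ⟨R, hR, hX_tail⟩ := hX (δ / 2) (half_pos hδ)
  filter_upwards [hX_tail, hY (ε / R) (by positivity) (δ / 2) (half_pos hδ)] with n hXn hYn θ
  linarith [measureReal_norm_smul_ge_le (μ := P θ) (X n θ) (Y n θ) ε hR, hXn θ, hYn θ]

theorem uniform_slutsky_general {𝕜 : Type*} [NormedRing 𝕜] [Module 𝕜 B] [IsBoundedSMul 𝕜 B]
    [MeasurableSpace B] [OpensMeasurableSpace B] [∀ θ, IsProbabilityMeasure (P θ)]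
    (hX : ∀ n θ, AEMeasurable (X n θ) (P θ)) (hXlim : ∀ θ, AEMeasurable (Xlim θ) (P θ))
    (hconv : TendstoUnifInDist P X Xlim) :
    (∀ Y : ℕ → Θ → Ω → B, (∀ n θ, AEMeasurable (fun ω => X n θ ω + Y n θ ω) (P θ)) →
        TendstoUnifInProb P Y (fun _ _ => 0) →
        TendstoUnifInDist P (fun n θ ω => X n θ ω + Y n θ ω) Xlim) ∧
      (UnifBoundedInProb P (fun _ => Xlim) → ∀ Y : ℕ → Θ → Ω → 𝕜,
        TendstoUnifInProb P Y (fun _ _ => 0) →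
        TendstoUnifInProb P (fun n θ ω => Y n θ ω • X n θ ω) (fun _ _ => 0)) :=
  ⟨fun _ hXY hY => hconv.add_tendstoUnifInProb_zero hX hXY hY,
    fun hbdd _ hY => hY.smul_unifBoundedInProb (hconv.unifBoundedInProb hX hXlim hbdd)⟩

end UniformModes

/-- Uniform Slutsky lemma: (i) adding a family converging uniformly in probability to zero
does not change a uniform distributional limit; (ii) multiplying by real variables converging
uniformly in probability to `0` gives uniform convergence in probability to `0`, provided the
family of distributional limits is uniformly tight. -/
theorem uniform_slutsky
    {Ω Θ B : Type*} [MeasurableSpace Ω]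
    [NormedAddCommGroup B] [NormedSpace ℝ B] [CompleteSpace B]
    [TopologicalSpace.SeparableSpace B] [MeasurableSpace B] [BorelSpace B]
    (P : Θ → Measure Ω) (hP : ∀ θ, IsProbabilityMeasure (P θ))
    (X : ℕ → Θ → Ω → B) (Xlim : Θ → Ω → B)
    (hXmeas : ∀ n θ, Measurable (X n θ)) (hXlimmeas : ∀ θ, Measurable (Xlim θ))
    (hconv : TendstoUnifInDist P X Xlim) :
    (∀ Y : ℕ → Θ → Ω → B, (∀ n θ, Measurable (Y n θ)) →
        TendstoUnifInProb P Y (fun _ _ => 0) →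
        TendstoUnifInDist P (fun n θ ω => X n θ ω + Y n θ ω) Xlim) ∧
      (UniformlyTight P Xlim → ∀ Y : ℕ → Θ → Ω → ℝ, (∀ n θ, Measurable (Y n θ)) →
        TendstoUnifInProb P Y (fun _ _ => 0) →
        TendstoUnifInProb P (fun n θ ω => Y n θ ω • X n θ ω) (fun _ _ => 0)) := by
  have : SecondCountableTopology B := UniformSpace.secondCountable_of_separable B
  obtain ⟨slutsky_add, slutsky_smul⟩ := uniform_slutsky_general (𝕜 := ℝ)
    (fun n θ => (hXmeas n θ).aemeasurable) (fun θ => (hXlimmeas θ).aemeasurable) hconv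
  exact ⟨fun Y hY => slutsky_add Y fun n θ => ((hXmeas n θ).add (hY n θ)).aemeasurable,
    fun hT Y _ => slutsky_smul hT.unifBoundedInProb Y⟩
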